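/- arXiv:2502.03184 — 4 statements merged into one kernel-verified Lean document; each statement's English description precedes it below -/
import Mathlib

section
/- Let ℓ ∈ ℂ with ℓ ≠ 0 and ℓ ≠ 1, and let I be the T-ideal of ℂ⟨X⟩ generated by the three polynomials (x₁x₂)x₃ − (x₁x₃)x₂, (x₁,x₂,x₃) − (x₂,x₁,x₃), and (x₁,x₂,x₃) − (x₁,x₃,x₂) − ℓ·[x₃,x₂]x₁. Then the following four polynomials belong to I: (i) ([x₁,x₂],x₃,x₄); (ii) (x₁x₂,x₃,x₄) − (x₁,x₃,x₄)x₂; (iii) (x₁,x₂,x₃)x₄ − (x₄,x₂,x₃)x₁; (iv) x₁(x₂,x₃,x₄) − ℓ·(x₂,x₃,x₄)x₁. -/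
noncomputable section

/-- The free nonassociative non-unital `ℂ`-algebra `ℂ⟨X⟩` on the countably
infinite set of free generators `X = {x₀, x₁, x₂, …}` indexed by `ℕ`. -/
abbrev FreeA : Type := FreeNonUnitalNonAssocAlgebra ℂ ℕ

/-- The free generator (variable) `xᵢ`. -/
def xv (i : ℕ) : FreeA := FreeNonUnitalNonAssocAlgebra.of ℂ i

/-- The set `Id(A)` of all polynomial identities of a (possibly nonassociative,
non-unital) `ℂ`-algebra `A`: those `f ∈ ℂ⟨X⟩` that vanish under every
substitution of elements of `A` for the variables. -/
def IdSet (A : Type) [NonUnitalNonAssocSemiring A] [Module ℂ A]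
    [IsScalarTower ℂ A A] [SMulCommClass ℂ A A] : Set FreeA :=
  {f | ∀ a : ℕ → A, FreeNonUnitalNonAssocAlgebra.lift ℂ a f = 0}

/-- A T-ideal: a two-sided ideal of `ℂ⟨X⟩` (closed under addition, scalar
multiples and multiplication by arbitrary elements on either side) that is
stable under all `ℂ`-algebra endomorphisms of `ℂ⟨X⟩`. -/
def IsTIdeal (I : Set FreeA) : Prop :=
  (0 : FreeA) ∈ I ∧
  (∀ f g : FreeA, f ∈ I → g ∈ I → f + g ∈ I) ∧
  (∀ (c : ℂ) (f : FreeA), f ∈ I → c • f ∈ I) ∧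
  (∀ f g : FreeA, f ∈ I → f * g ∈ I) ∧
  (∀ f g : FreeA, f ∈ I → g * f ∈ I) ∧
  (∀ (φ : FreeA →ₙₐ[ℂ] FreeA) (f : FreeA), f ∈ I → φ f ∈ I)

/-- The T-ideal generated by a set `S`: the smallest T-ideal containing `S`. -/
def TIdealGen (S : Set FreeA) : Set FreeA := ⋂₀ {I : Set FreeA | IsTIdeal I ∧ S ⊆ I}

/-- the commutator `[f, g] = fg - gf`. -/
def brk (f g : FreeA) : FreeA := f * g - g * f

/-- the associator `(f, g, h) = (fg)h - f(gh)`. -/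
def assocP (f g h : FreeA) : FreeA := (f * g) * h - f * (g * h)

/-- The four identities, as congruences modulo a submodule stable under right multiplication
and containing all substitution instances of the three generators. -/
theorem N6_core (l : ℂ) (h0 : l ≠ 0) (N : Submodule ℂ FreeA)
    (hr : ∀ f g : FreeA, f ∈ N → f * g ∈ N)
    (g1 : ∀ x y z : FreeA, (x * y) * z - (x * z) * y ∈ N)
    (g2 : ∀ x y z : FreeA, assocP x y z - assocP y x z ∈ N)
    (g3 : ∀ x y z : FreeA, assocP x y z - assocP x z y - l • (brk z y * x) ∈ N)
    (a b c d : FreeA) :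
    assocP (brk a b) c d ∈ N ∧ assocP (a * b) c d - assocP a c d * b ∈ N ∧
    assocP a b c * d - assocP d b c * a ∈ N ∧
    a * assocP b c d - l • (assocP b c d * a) ∈ N := by
  obtain ⟨q, hq⟩ : ∃ q : FreeA →ₗ[ℂ] FreeA ⧸ N, q = N.mkQ := ⟨_, rfl⟩
  have mem : ∀ f : FreeA, f ∈ N ↔ q f = 0 := by
    intro f
    rw [hq, Submodule.mkQ_apply, Submodule.Quotient.mk_eq_zero]
  have e1 : ∀ x y z : FreeA, q ((x * y) * z) - q ((x * z) * y) = 0 := by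
    intro x y z
    have h := (mem _).1 (g1 x y z)
    simpa only [map_sub] using h
  have e1r : ∀ x y z t : FreeA, q (((x * y) * z) * t) - q (((x * z) * y) * t) = 0 := by
    intro x y z t
    have h := (mem _).1 (hr _ t (g1 x y z))
    simpa only [sub_mul, map_sub] using h
  have e2 : ∀ x y z : FreeA, q ((x * y) * z) - q (x * (y * z))
      - (q ((y * x) * z) - q (y * (x * z))) = 0 := by
    intro x y z
    have h := (mem _).1 (g2 x y z)
    simpa only [assocP, map_sub] using h
  have e2r : ∀ x y z t : FreeA, q (((x * y) * z) * t) - q ((x * (y * z)) * t)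
      - (q (((y * x) * z) * t) - q ((y * (x * z)) * t)) = 0 := by
    intro x y z t
    have h := (mem _).1 (hr _ t (g2 x y z))
    simpa only [assocP, sub_mul, map_sub] using h
  have e3 : ∀ x y z : FreeA, q (x * (z * y)) - q (x * (y * z))
      - l • (q ((z * y) * x) - q ((y * z) * x)) = 0 := by
    intro x y z
    have h := (mem _).1 (g3 x y z)
    simp only [assocP, brk, sub_mul, map_sub, map_smul] at h
    linear_combination (norm := module) h - e1 x y z
  have e3r : ∀ x y z t : FreeA, q ((x * (z * y)) * t) - q ((x * (y * z)) * t)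
      - l • (q (((z * y) * x) * t) - q (((y * z) * x) * t)) = 0 := by
    intro x y z t
    have h := (mem _).1 (hr _ t (g3 x y z))
    simp only [assocP, brk, sub_mul, map_sub, map_smul, smul_mul_assoc] at h
    linear_combination (norm := module) h - e1r x y z t
  -- identity (i)
  have i1 : ∀ a b c d : FreeA, q (((a * b) * c) * d) - q ((a * b) * (c * d))
      - (q (((b * a) * c) * d) - q ((b * a) * (c * d))) = 0 := by
    intro a b c d
    have h : l • (q (((a * b) * c) * d) - q ((a * b) * (c * d))
      - (q (((b * a) * c) * d) - q ((b * a) * (c * d)))) = 0 := by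
      linear_combination (norm := module) e3r c a b d - e1 c (b * a) d - e3 (c * d) a b - e1 c d (a * b)
    exact (smul_eq_zero.1 h).resolve_left h0
  -- identity (ii)
  have i2 : ∀ a b c d : FreeA, q (((a * b) * c) * d) - q ((a * b) * (c * d))
      - (q (((a * c) * d) * b) - q ((a * (c * d)) * b)) = 0 := by
    intro a b c d
    linear_combination (norm := module) e1r a b c d + e1 (a * c) b d - e1 a b (c * d)
  -- identity (iii)
  have i3 : ∀ a b c d : FreeA, q (((a * b) * c) * d) - q ((a * (b * c)) * d)
      - (q (((d * b) * c) * a) - q ((d * (b * c)) * a)) = 0 := by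
    intro a b c d
    linear_combination (norm := module) i1 a d b c - i2 a d b c + i2 d a b c
  -- identity (iv)
  have i4 : ∀ a b c d : FreeA, q (a * ((b * c) * d)) - q (a * (b * (c * d)))
      - l • (q (((b * c) * d) * a) - q ((b * (c * d)) * a)) = 0 := by
    intro a b c d
    -- expand `a(b,c,d)` through the Teichmueller identity
    linear_combination (norm := module) i2 a b c d - e2 a (b * c) d - i2 b c a d + e3 a b (c * d)
      + e1 a b (c * d) + e2 a (c * d) b + i2 c d a b
      + i3 a c d b + e2r b c d a - i3 a b d c + e2r a b d c
      + e2r c a b d + e3r a c b d - e1r a b c d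
      + l • (e1r c d b a) + l • (e1 (b * c) a d - e1 (c * b) a d)
  refine ⟨(mem _).2 ?_, (mem _).2 ?_, (mem _).2 ?_, (mem _).2 ?_⟩
  · simpa only [assocP, brk, sub_mul, map_sub, sub_sub_sub_comm] using i1 a b c d
  · simpa only [assocP, sub_mul, map_sub] using i2 a b c d
  · simpa only [assocP, sub_mul, map_sub] using i3 a b c d
  · simpa only [assocP, sub_mul, mul_sub, map_sub, map_smul] using i4 a b c d

/-- For every `ℓ ∈ ℂ \\ {0, 1}`, the four polynomials `([x₁,x₂],x₃,x₄)`,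
`(x₁x₂,x₃,x₄) - (x₁,x₃,x₄)x₂`, `(x₁,x₂,x₃)x₄ - (x₄,x₂,x₃)x₁` and
`x₁(x₂,x₃,x₄) - ℓ·(x₂,x₃,x₄)x₁` lie in the T-ideal generated by
`(x₁x₂)x₃ - (x₁x₃)x₂`, `(x₁,x₂,x₃) - (x₂,x₁,x₃)` and
`(x₁,x₂,x₃) - (x₁,x₃,x₂) - ℓ·[x₃,x₂]x₁`. -/
theorem N6_consequences (l : ℂ) (h0 : l ≠ 0) (h1 : l ≠ 1) :
    assocP (brk (xv 1) (xv 2)) (xv 3) (xv 4) ∈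
      TIdealGen { (xv 1 * xv 2) * xv 3 - (xv 1 * xv 3) * xv 2,
        assocP (xv 1) (xv 2) (xv 3) - assocP (xv 2) (xv 1) (xv 3),
        assocP (xv 1) (xv 2) (xv 3) - assocP (xv 1) (xv 3) (xv 2) -
          l • (brk (xv 3) (xv 2) * xv 1) } ∧
    assocP (xv 1 * xv 2) (xv 3) (xv 4) - assocP (xv 1) (xv 3) (xv 4) * xv 2 ∈
      TIdealGen { (xv 1 * xv 2) * xv 3 - (xv 1 * xv 3) * xv 2,
        assocP (xv 1) (xv 2) (xv 3) - assocP (xv 2) (xv 1) (xv 3),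
        assocP (xv 1) (xv 2) (xv 3) - assocP (xv 1) (xv 3) (xv 2) -
          l • (brk (xv 3) (xv 2) * xv 1) } ∧
    assocP (xv 1) (xv 2) (xv 3) * xv 4 - assocP (xv 4) (xv 2) (xv 3) * xv 1 ∈
      TIdealGen { (xv 1 * xv 2) * xv 3 - (xv 1 * xv 3) * xv 2,
        assocP (xv 1) (xv 2) (xv 3) - assocP (xv 2) (xv 1) (xv 3),
        assocP (xv 1) (xv 2) (xv 3) - assocP (xv 1) (xv 3) (xv 2) -
          l • (brk (xv 3) (xv 2) * xv 1) } ∧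
    xv 1 * assocP (xv 2) (xv 3) (xv 4) - l • (assocP (xv 2) (xv 3) (xv 4) * xv 1) ∈
      TIdealGen { (xv 1 * xv 2) * xv 3 - (xv 1 * xv 3) * xv 2,
        assocP (xv 1) (xv 2) (xv 3) - assocP (xv 2) (xv 1) (xv 3),
        assocP (xv 1) (xv 2) (xv 3) - assocP (xv 1) (xv 3) (xv 2) -
          l • (brk (xv 3) (xv 2) * xv 1) } := by
  have key : ∀ I : Set FreeA, IsTIdeal I → { (xv 1 * xv 2) * xv 3 - (xv 1 * xv 3) * xv 2,
        assocP (xv 1) (xv 2) (xv 3) - assocP (xv 2) (xv 1) (xv 3),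
        assocP (xv 1) (xv 2) (xv 3) - assocP (xv 1) (xv 3) (xv 2) -
          l • (brk (xv 3) (xv 2) * xv 1) } ⊆ I → ∀ a b c d : FreeA,
      assocP (brk a b) c d ∈ I ∧ assocP (a * b) c d - assocP a c d * b ∈ I ∧
      assocP a b c * d - assocP d b c * a ∈ I ∧
      a * assocP b c d - l • (assocP b c d * a) ∈ I := by
    rintro I ⟨hz, hadd, hsmul, hr, -, hend⟩ hS
    let N : Submodule ℂ FreeA :=
      { carrier := I
        zero_mem' := hz
        add_mem' := fun {f g} hf hg => hadd f g hf hg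
        smul_mem' := hsmul }
    have sub : ∀ x y z : FreeA, ∃ φ : FreeA →ₙₐ[ℂ] FreeA,
        φ (xv 1) = x ∧ φ (xv 2) = y ∧ φ (xv 3) = z := by
      intro x y z
      refine ⟨FreeNonUnitalNonAssocAlgebra.lift ℂ
        (fun n => if n = 1 then x else if n = 2 then y else z), ?_, ?_, ?_⟩ <;>
      simp [xv]
    refine N6_core l h0 N hr ?_ ?_ ?_
    · intro x y z
      obtain ⟨φ, p1, p2, p3⟩ := sub x y z
      have h := hend φ _ (hS (Or.inl rfl))
      simp only [map_sub, map_mul, p1, p2, p3] at h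
      exact h
    · intro x y z
      obtain ⟨φ, p1, p2, p3⟩ := sub x y z
      have h := hend φ _ (hS (Or.inr (Or.inl rfl)))
      simp only [assocP, map_sub, map_mul, p1, p2, p3] at h
      exact h
    · intro x y z
      obtain ⟨φ, p1, p2, p3⟩ := sub x y z
      have h := hend φ _ (hS (Or.inr (Or.inr rfl)))
      simp only [assocP, brk, map_sub, map_mul, map_smul, p1, p2, p3] at h
      exact h
  refine ⟨?_, ?_, ?_, ?_⟩
  · rintro I ⟨hI, hS⟩
    exact (key I hI hS _ _ _ _).1
  · rintro I ⟨hI, hS⟩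
    exact (key I hI hS _ _ _ _).2.1
  · rintro I ⟨hI, hS⟩
    exact (key I hI hS _ _ _ _).2.2.1
  · rintro I ⟨hI, hS⟩
    exact (key I hI hS _ _ _ _).2.2.2
end
end

section
/- Let ℓ ∈ ℂ with ℓ ≠ 0 and ℓ ≠ 1, and set g₁ = (x₁x₂)x₃ − (x₁x₃)x₂, g₂ = (x₁,x₂,x₃) − (x₂,x₁,x₃), g₃ = (x₁,x₂,x₃) − (x₁,x₃,x₂) − ℓ·[x₃,x₂]x₁ in ℂ⟨X⟩. Then this generating set of the T-ideal I = T-ideal(g₁,g₂,g₃) is minimal: for each k ∈ {1,2,3}, the polynomial g_k does not belong to the T-ideal generated by the other two polynomials. -/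
noncomputable section

/-- The module `M` equipped with the multiplication given by the bilinear map `B`. -/
def BAlg {M : Type} [AddCommGroup M] [Module ℂ M] (_B : M →ₗ[ℂ] M →ₗ[ℂ] M) : Type := M

section BAlgInst
variable {M : Type} [AddCommGroup M] [Module ℂ M] (B : M →ₗ[ℂ] M →ₗ[ℂ] M)

instance : AddCommGroup (BAlg B) := inferInstanceAs (AddCommGroup M)
instance : Module ℂ (BAlg B) := inferInstanceAs (Module ℂ M)
instance : NonUnitalNonAssocRing (BAlg B) :=
  { (inferInstance : AddCommGroup (BAlg B)) with
    mul := fun a b => (B a b : M)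
    left_distrib := fun a b c => (B a).map_add b c
    right_distrib := fun a b c => B.map_add₂ a b c
    zero_mul := fun a => B.map_zero₂ a
    mul_zero := fun a => (B a).map_zero }
instance : IsScalarTower ℂ (BAlg B) (BAlg B) := ⟨fun r a b => B.map_smul₂ r a b⟩
instance : SMulCommClass ℂ (BAlg B) (BAlg B) := ⟨fun r a b => ((B a).map_smul r b).symm⟩

/-- Evaluation of polynomials in the algebra `BAlg B`. -/
def ev (a : ℕ → M) : FreeA →ₙₐ[ℂ] BAlg B :=
  FreeNonUnitalNonAssocAlgebra.lift ℂ (fun i => (a i : BAlg B))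

theorem ev_xv (a : ℕ → M) (i : ℕ) : ev B a (xv i) = a i := by
  exact FreeNonUnitalNonAssocAlgebra.lift_of_apply (A := BAlg B) ℂ a i

theorem balg_mul (a b : BAlg B) : a * b = B a b := rfl

theorem isTIdeal_ev : IsTIdeal {f | ∀ a, ev B a f = 0} := by
  refine ⟨fun a => map_zero _, fun f g hf hg a => ?_, fun c f hf a => ?_, fun f g hf a => ?_,
    fun f g hf a => ?_, fun φ f hf a => ?_⟩
  · rw [map_add, hf a, hg a, add_zero]
  · rw [map_smul, hf a, smul_zero]
  · rw [map_mul, hf a, zero_mul]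
  · rw [map_mul, hf a, mul_zero]
  · have h : (ev B a).comp φ = ev B (fun i => ev B a (φ (xv i))) := by
      apply FreeNonUnitalNonAssocAlgebra.hom_ext
      intro i
      exact (ev_xv B (fun i => ev B a (φ (xv i))) i).symm
    have h2 := congrArg (fun ψ => ψ f) h
    exact h2.trans (hf _)

theorem ev_of_mem {S : Set FreeA} {f : FreeA} (hf : f ∈ TIdealGen S)
    (hS : ∀ s ∈ S, ∀ a, ev B a s = 0) (a : ℕ → M) : ev B a f = 0 :=
  hf {f | ∀ a, ev B a f = 0} ⟨isTIdeal_ev B, hS⟩ a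

theorem ev_g1 (a : ℕ → M) : ev B a ((xv 1 * xv 2) * xv 3 - (xv 1 * xv 3) * xv 2) =
    (B (B (a 1) (a 2)) (a 3) - B (B (a 1) (a 3)) (a 2) : M) := by
  simp only [map_sub, map_mul, ev_xv]; rfl

theorem ev_g2 (a : ℕ → M) :
    ev B a (assocP (xv 1) (xv 2) (xv 3) - assocP (xv 2) (xv 1) (xv 3)) =
    ((B (B (a 1) (a 2)) (a 3) - B (a 1) (B (a 2) (a 3))) -
      (B (B (a 2) (a 1)) (a 3) - B (a 2) (B (a 1) (a 3))) : M) := by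
  simp only [assocP, map_sub, map_mul, ev_xv]; rfl

theorem ev_g3 (l : ℂ) (a : ℕ → M) :
    ev B a (assocP (xv 1) (xv 2) (xv 3) - assocP (xv 1) (xv 3) (xv 2) -
        l • (brk (xv 3) (xv 2) * xv 1)) =
    ((B (B (a 1) (a 2)) (a 3) - B (a 1) (B (a 2) (a 3))) -
      (B (B (a 1) (a 3)) (a 2) - B (a 1) (B (a 3) (a 2))) -
      l • (B (B (a 3) (a 2)) (a 1) - B (B (a 2) (a 3)) (a 1)) : M) := by
  simp only [assocP, brk, map_sub, map_mul, map_smul, ev_xv, sub_mul]; rfl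

end BAlgInst

/-- The product `a ∘ b = a₁ b` on `ℂ²`. -/
def B1 : (ℂ × ℂ) →ₗ[ℂ] (ℂ × ℂ) →ₗ[ℂ] (ℂ × ℂ) :=
  LinearMap.mk₂ ℂ (fun a b => a.1 • b) (fun a b c => add_smul _ _ _)
    (fun r a b => mul_smul _ _ _) (fun a b c => smul_add _ _ _)
    (fun r a b => smul_comm _ _ _)

/-- The product with `e e = u`, `f u = w` on `ℂ⁴` with basis `e, f, u, w`. -/
def B2 : (ℂ × ℂ × ℂ × ℂ) →ₗ[ℂ] (ℂ × ℂ × ℂ × ℂ) →ₗ[ℂ] (ℂ × ℂ × ℂ × ℂ) :=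
  LinearMap.mk₂ ℂ (fun a b => (0, 0, a.1 * b.1, a.2.1 * b.2.2.1))
    (fun a b c => by simp [add_mul])
    (fun r a b => by simp [mul_assoc]) (fun a b c => by simp [mul_add])
    (fun r a b => by simp [mul_left_comm])

/-- The Novikov product `a ∘ b = a b'` on `ℂ[t]`. -/
def B3 : Polynomial ℂ →ₗ[ℂ] Polynomial ℂ →ₗ[ℂ] Polynomial ℂ :=
  LinearMap.mk₂ ℂ (fun a b => a * Polynomial.derivative b)
    (fun a b c => add_mul _ _ _)
    (fun r a b => by simp) (fun a b c => by simp [mul_add])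
    (fun r a b => by simp)

theorem B1_apply (a b : ℂ × ℂ) : B1 a b = (a.1 * b.1, a.1 * b.2) := rfl
theorem B2_apply (a b : ℂ × ℂ × ℂ × ℂ) :
    B2 a b = (0, 0, a.1 * b.1, a.2.1 * b.2.2.1) := rfl
theorem B3_apply (a b : Polynomial ℂ) : B3 a b = a * Polynomial.derivative b := rfl

/-- For every `ℓ ∈ ℂ \\ {0, 1}`, the generating set `g₁, g₂, g₃` of the
T-ideal of identities of `𝐍₆^ℓ` is minimal: none of the three polynomials
belongs to the T-ideal generated by the other two. -/
theorem N6_generators_minimal (l : ℂ) (h0 : l ≠ 0) (h1 : l ≠ 1) :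
    (xv 1 * xv 2) * xv 3 - (xv 1 * xv 3) * xv 2 ∉
      TIdealGen
        { assocP (xv 1) (xv 2) (xv 3) - assocP (xv 2) (xv 1) (xv 3),
          assocP (xv 1) (xv 2) (xv 3) - assocP (xv 1) (xv 3) (xv 2) -
            l • (brk (xv 3) (xv 2) * xv 1) } ∧
    assocP (xv 1) (xv 2) (xv 3) - assocP (xv 2) (xv 1) (xv 3) ∉
      TIdealGen
        { (xv 1 * xv 2) * xv 3 - (xv 1 * xv 3) * xv 2,
          assocP (xv 1) (xv 2) (xv 3) - assocP (xv 1) (xv 3) (xv 2) -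
            l • (brk (xv 3) (xv 2) * xv 1) } ∧
    assocP (xv 1) (xv 2) (xv 3) - assocP (xv 1) (xv 3) (xv 2) -
        l • (brk (xv 3) (xv 2) * xv 1) ∉
      TIdealGen
        { (xv 1 * xv 2) * xv 3 - (xv 1 * xv 3) * xv 2,
          assocP (xv 1) (xv 2) (xv 3) - assocP (xv 2) (xv 1) (xv 3) } := by
  refine ⟨fun h => ?_, fun h => ?_, fun h => ?_⟩
  · have h2 := ev_of_mem B1 h (by
      rintro s (rfl | rfl) a
      · rw [ev_g2]
        simp only [B1_apply]
        change _ = ((0, 0) : ℂ × ℂ)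
        ext <;> simp <;> ring
      · rw [ev_g3]
        simp only [B1_apply]
        change _ = ((0, 0) : ℂ × ℂ)
        ext <;> simp <;> ring) (fun i => if i = 3 then (0, 1) else (1, 0))
    rw [ev_g1] at h2
    have h3 := congrArg (fun x : ℂ × ℂ => x.2) h2
    simp [B1_apply] at h3
    exact one_ne_zero h3
  · have h2 := ev_of_mem B2 h (by
      rintro s (rfl | rfl) a
      · rw [ev_g1]
        simp only [B2_apply]
        change _ = ((0, 0, 0, 0) : ℂ × ℂ × ℂ × ℂ)
        ext <;> simp
      · rw [ev_g3]
        simp only [B2_apply]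
        change _ = ((0, 0, 0, 0) : ℂ × ℂ × ℂ × ℂ)
        ext <;> simp <;> ring) (fun i => if i = 1 then (0, 1, 0, 0) else (1, 0, 0, 0))
    rw [ev_g2] at h2
    have h3 := congrArg (fun x : ℂ × ℂ × ℂ × ℂ => x.2.2.2) h2
    simp [B2_apply] at h3
    exact one_ne_zero (neg_eq_zero.mp h3)
  · have h2 := ev_of_mem B3 h (by
      rintro s (rfl | rfl) a
      · rw [ev_g1]
        simp only [B3_apply]
        change _ = (0 : Polynomial ℂ)
        ring
      · rw [ev_g2]
        simp only [B3_apply]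
        change _ = (0 : Polynomial ℂ)
        simp only [Polynomial.derivative_mul]
        ring) (fun i => if i = 3 then Polynomial.X ^ 2 else 1)
    rw [ev_g3] at h2
    have h3 := congrArg (fun x : Polynomial ℂ => x.eval 0) h2
    simp [B3_apply] at h3
    change _ = Polynomial.eval 0 (0 : Polynomial ℂ) at h3
    simp at h3
end
end

section
/- Let A and B be two-dimensional Novikov algebras over ℂ, neither of which is associative. Then A and B are isomorphic as ℂ-algebras if and only if Id(A) = Id(B), i.e., if and only if A and B satisfy exactly the same polynomial identities. -/
noncomputable section

/-- `e, n` is a basis-like pair with multiplication table determined by `a, l, b`. -/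
def NForm (A : Type) [NonUnitalNonAssocRing A] [Module ℂ A] (a l b : ℂ) : Prop :=
  ∃ e n : A, (∀ s t : ℂ, s • e + t • n = 0 → s = 0 ∧ t = 0) ∧
    e * e = a • e + b • n ∧ e * n = l • n ∧ n * e = a • n ∧ n * n = 0

theorem exists_coords {A : Type} [NonUnitalNonAssocRing A] [Module ℂ A]
    (hdim : Module.finrank ℂ A = 2) (e n : A)
    (h : ∀ s t : ℂ, s • e + t • n = 0 → s = 0 ∧ t = 0) :
    ∃ v : Module.Basis (Fin 2) ℂ A, v 0 = e ∧ v 1 = n := by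
  have hl : LinearIndependent ℂ ![e, n] := LinearIndependent.pair_iff.2 h
  refine ⟨basisOfLinearIndependentOfCardEqFinrank hl (by simp [hdim]), ?_, ?_⟩ <;> simp

theorem coords {A : Type} [NonUnitalNonAssocRing A] [Module ℂ A]
    (hdim : Module.finrank ℂ A = 2) (e n : A)
    (h : ∀ s t : ℂ, s • e + t • n = 0 → s = 0 ∧ t = 0) (x : A) :
    ∃ s t : ℂ, x = s • e + t • n := by
  obtain ⟨v, rfl, rfl⟩ := exists_coords hdim e n h
  refine ⟨v.repr x 0, v.repr x 1, ?_⟩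
  rw [← Fin.sum_univ_two (fun i => v.repr x i • v i), v.sum_repr x]

theorem coord_eq {A : Type} [NonUnitalNonAssocRing A] [Module ℂ A] {e n : A}
    (h : ∀ s t : ℂ, s • e + t • n = 0 → s = 0 ∧ t = 0) {s t s' t' : ℂ}
    (he : s • e + t • n = s' • e + t' • n) : s = s' ∧ t = t' := by
  have := h (s - s') (t - t') (by rw [sub_smul, sub_smul, ← sub_eq_zero.2 he]; abel)
  exact ⟨sub_eq_zero.1 this.1, sub_eq_zero.1 this.2⟩

section
variable {A : Type} [NonUnitalNonAssocRing A] [Module ℂ A]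
    [IsScalarTower ℂ A A] [SMulCommClass ℂ A A]

theorem mul_expand (e n : A) (s t s' t' : ℂ) :
    (s • e + t • n) * (s' • e + t' • n) =
      (s * s') • (e * e) + (s * t') • (e * n) + (t * s') • (n * e) + (t * t') • (n * n) := by
  simp only [add_mul, mul_add, smul_mul_assoc, mul_smul_comm, smul_smul]
  module

theorem comm_of_pair (hdim : Module.finrank ℂ A = 2) (e n : A)
    (h : ∀ s t : ℂ, s • e + t • n = 0 → s = 0 ∧ t = 0) (x y : A) :
    ∃ c : ℂ, x * y - y * x = c • (e * n - n * e) := by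
  obtain ⟨s, t, rfl⟩ := coords hdim e n h x
  obtain ⟨s', t', rfl⟩ := coords hdim e n h y
  refine ⟨s * t' - t * s', ?_⟩
  rw [mul_expand, mul_expand]
  module

theorem exists_NForm (hdim : Module.finrank ℂ A = 2)
    (lsym : ∀ x y z : A, (x * y) * z - x * (y * z) = (y * x) * z - y * (x * z))
    (rcom : ∀ x y z : A, (x * y) * z = (x * z) * y)
    (nonassoc : ¬ ∀ x y z : A, (x * y) * z = x * (y * z)) :
    ∃ a l b : ℂ, NForm A a l b ∧ a ≠ l ∧ (l = 0 → b ≠ 0) := by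
  have hnc : ∃ x y : A, x * y - y * x ≠ 0 := by
    by_contra hc
    push Not at hc
    have hc' : ∀ x y : A, x * y = y * x := fun x y => sub_eq_zero.1 (hc x y)
    apply nonassoc
    intro x y z
    rw [hc' x y, rcom, hc' x]
  obtain ⟨x, y, hxy⟩ := hnc
  obtain ⟨n, hn⟩ : ∃ n : A, n = x * y - y * x := ⟨_, rfl⟩
  have hn0 : n ≠ 0 := hn ▸ hxy
  -- every commutator is a multiple of n
  have hxyind : ∀ s t : ℂ, s • x + t • y = 0 → s = 0 ∧ t = 0 := by
    intro s t hst
    have h1 : (s • x + t • y) * y - y * (s • x + t • y) = s • n := by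
      simp only [add_mul, mul_add, smul_mul_assoc, mul_smul_comm, hn]; module
    have h2 : x * (s • x + t • y) - (s • x + t • y) * x = t • n := by
      simp only [add_mul, mul_add, smul_mul_assoc, mul_smul_comm, hn]; module
    rw [hst] at h1 h2
    simp only [zero_mul, mul_zero, sub_zero] at h1 h2
    exact ⟨(smul_eq_zero.1 h1.symm).resolve_right hn0, (smul_eq_zero.1 h2.symm).resolve_right hn0⟩
  have hcomm : ∀ u v : A, ∃ c : ℂ, u * v - v * u = c • n := by
    intro u v; rw [hn]; exact comm_of_pair hdim x y hxyind u v
  -- choose e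
  obtain ⟨e, hind⟩ : ∃ e : A, ∀ s t : ℂ, s • e + t • n = 0 → s = 0 ∧ t = 0 := by
    obtain ⟨e, he⟩ := exists_linearIndependent_pair_of_one_lt_finrank
      (R := ℂ) (M := A) (by omega) hn0
    refine ⟨e, fun s t hst => ?_⟩
    have := LinearIndependent.pair_iff.1 he t s (by rw [← hst]; abel)
    exact ⟨this.2, this.1⟩
  obtain ⟨c1, hc1⟩ := comm_of_pair hdim e n hind x y
  obtain ⟨d, hd⟩ := hcomm e n
  have hd0 : d ≠ 0 := by
    rintro rfl
    apply hn0
    rw [hn, hc1, hd]; simp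
  obtain ⟨a, b, hee⟩ := coords hdim e n hind (e * e)
  obtain ⟨p, m, hne⟩ := coords hdim e n hind (n * e)
  obtain ⟨q, r, hnn⟩ := coords hdim e n hind (n * n)
  have hen : e * n = p • e + (m + d) • n := by
    rw [← sub_add_cancel (e * n) (n * e), hd, hne]; module
  have R1 := rcom n n e
  have R2 := rcom e e n
  have L1 := lsym e n n
  have L2 := lsym e n e
  rw [sub_eq_sub_iff_add_eq_add] at L1 L2
  simp only [hee, hne, hnn, hen, add_mul, mul_add, smul_mul_assoc, mul_smul_comm, smul_add, smul_smul] at R1 R2 L1 L2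
  have R1' := coord_eq hind (s := q * a + r * p) (t := q * b + r * m)
    (s' := p * p + m * q) (t' := p * (m + d) + m * r) (by linear_combination (norm := module) R1)
  have R2' := coord_eq hind (s := a * p + b * q) (t := a * (m + d) + b * r)
    (s' := p * a + (m + d) * p) (t' := p * b + (m + d) * m) (by linear_combination (norm := module) R2)
  have L1' := coord_eq hind (s := d * q) (t := d * r)
    (s' := q * a + r * p - p * p - (m + d) * q)
    (t' := q * b + r * (m + d) - p * m - (m + d) * r) (by linear_combination (norm := module) L1)
  have L2' := coord_eq hind (s := d * p) (t := d * m)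
    (s' := p * a + m * p - a * p - b * q)
    (t' := p * b + m * (m + d) - a * m - b * r) (by linear_combination (norm := module) L2)
  obtain ⟨r1, r2⟩ := R1'
  obtain ⟨r3, r4⟩ := R2'
  obtain ⟨l1, l2⟩ := L1'
  obtain ⟨l3, l4⟩ := L2'
  have hq : q = 0 := by
    have : d * q = 0 := by linear_combination (l1 + r1) / 2
    exact (mul_eq_zero.1 this).resolve_left hd0
  subst hq
  have hp : p = 0 := by
    have h1 : d * p = 0 := by linear_combination (l3 - r3) / 2
    exact (mul_eq_zero.1 h1).resolve_left hd0
  subst hp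
  have hr : r = 0 := by
    have h1 : d * r = 0 := by linear_combination l2
    exact (mul_eq_zero.1 h1).resolve_left hd0
  subst hr
  have hm : m = a := by
    have h1 : m * (m - a) = 0 := by linear_combination -l4
    have h2 : (m + d) * (m - a) = 0 := by linear_combination -r4
    have h3 : d * (m - a) = 0 := by linear_combination h2 - h1
    exact sub_eq_zero.1 ((mul_eq_zero.1 h3).resolve_left hd0)
  subst hm
  refine ⟨m, m + d, b, ⟨e, n, hind, hee, by simpa using hen, by simpa using hne, by simpa using hnn⟩,
    by simpa using hd0, ?_⟩
  rintro hl rfl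
  apply nonassoc
  simp only [zero_smul, zero_add, add_zero, hl] at hee hen hne hnn
  intro u v w
  obtain ⟨s, t, rfl⟩ := coords hdim e n hind u
  obtain ⟨s', t', rfl⟩ := coords hdim e n hind v
  obtain ⟨s'', t'', rfl⟩ := coords hdim e n hind w
  simp only [add_mul, mul_add, smul_mul_assoc, mul_smul_comm, hee, hen, hne, hnn, smul_zero,
    add_zero, zero_add]
  module

theorem NForm.scale {a l b : ℂ} (h : NForm A a l b) (t s : ℂ) (ht : t ≠ 0) (hs : s ≠ 0) :
    NForm A (t * a) (t * l) (t ^ 2 * b / s) := by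
  obtain ⟨e, n, hind, hee, hen, hne, hnn⟩ := h
  refine ⟨t • e, s • n, ?_, ?_, ?_, ?_, ?_⟩
  · intro u v huv
    rw [smul_smul, smul_smul] at huv
    have := hind _ _ huv
    simpa [ht, hs] using this
  · simp only [smul_mul_assoc, mul_smul_comm, hee, smul_add, smul_smul]
    rw [show t ^ 2 * b / s * s = t * (t * b) by field_simp]
    module
  · simp only [smul_mul_assoc, mul_smul_comm, hen]; module
  · simp only [smul_mul_assoc, mul_smul_comm, hne]; module
  · simp [smul_mul_assoc, mul_smul_comm, hnn]

theorem NForm.shift {a l b : ℂ} (h : NForm A a l b) (hl : l ≠ 0) : NForm A a l 0 := by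
  obtain ⟨e, n, hind, hee, hen, hne, hnn⟩ := h
  refine ⟨e + (- b / l) • n, n, ?_, ?_, ?_, ?_, hnn⟩
  · intro u v huv
    have := hind u (u * (- b / l) + v) (by rw [← huv]; module)
    obtain ⟨rfl, h2⟩ := this
    simpa using h2
  · simp only [add_mul, mul_add, smul_mul_assoc, mul_smul_comm, hee, hen, hne, hnn, smul_smul]
    have h1 : (- b / l) • l • n = (-b) • n := by
      rw [smul_smul, show - b / l * l = - b by field_simp]
    rw [smul_add, h1]
    module
  · simp [add_mul, hen, hnn, smul_mul_assoc]
  · simp [mul_add, hne, hnn, mul_smul_comm]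

theorem NForm.iso {B : Type} [NonUnitalNonAssocRing B] [Module ℂ B]
    [IsScalarTower ℂ B B] [SMulCommClass ℂ B B]
    (hdimA : Module.finrank ℂ A = 2) (hdimB : Module.finrank ℂ B = 2)
    {a l b : ℂ} (hA : NForm A a l b) (hB : NForm B a l b) :
    ∃ φ : A →ₙₐ[ℂ] B, Function.Bijective φ := by
  obtain ⟨e, n, hind, hee, hen, hne, hnn⟩ := hA
  obtain ⟨e', n', hind', hee', hen', hne', hnn'⟩ := hB
  obtain ⟨v, hv0, hv1⟩ := exists_coords hdimA e n hind
  obtain ⟨w, hw0, hw1⟩ := exists_coords hdimB e' n' hind'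
  let f : A ≃ₗ[ℂ] B := v.equiv w (Equiv.refl _)
  have fe : f e = e' := by simp [f, ← hv0, ← hw0]
  have fn : f n = n' := by simp [f, ← hv1, ← hw1]
  have hmul : ∀ x y, f (x * y) = f x * f y := by
    intro x y
    obtain ⟨s, t, rfl⟩ := coords hdimA e n hind x
    obtain ⟨s', t', rfl⟩ := coords hdimA e n hind y
    simp only [mul_expand, map_add, map_smul, fe, fn, hee, hen, hne, hnn, hee', hen', hne', hnn',
      map_zero]
  exact ⟨{ toFun := f, map_smul' := fun c x => f.map_smul c x, map_zero' := f.map_zero,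
           map_add' := f.map_add, map_mul' := hmul }, f.bijective⟩

/-- The identity which separates the algebras. -/
def sepId (a l : ℂ) : FreeA :=
  l • ((xv 1 * xv 2 - xv 2 * xv 1) * xv 0) - a • (xv 0 * (xv 1 * xv 2 - xv 2 * xv 1))

theorem lift_sepId (a l : ℂ) (f : ℕ → A) :
    FreeNonUnitalNonAssocAlgebra.lift ℂ f (sepId a l) =
      l • ((f 1 * f 2 - f 2 * f 1) * f 0) - a • (f 0 * (f 1 * f 2 - f 2 * f 1)) := by
  have h : ∀ i, FreeNonUnitalNonAssocAlgebra.lift ℂ f (xv i) = f i := fun i =>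
    FreeNonUnitalNonAssocAlgebra.lift_of_apply ℂ f i
  simp only [sepId, map_sub, map_smul, map_mul, h]

theorem sepId_mem (hdim : Module.finrank ℂ A = 2) {a l b : ℂ} (h : NForm A a l b) :
    sepId a l ∈ IdSet A := by
  obtain ⟨e, n, hind, hee, hen, hne, hnn⟩ := h
  intro f
  rw [lift_sepId]
  obtain ⟨c, hc⟩ := comm_of_pair hdim e n hind (f 1) (f 2)
  obtain ⟨s, t, hs⟩ := coords hdim e n hind (f 0)
  rw [hc, hs, hen, hne]
  simp only [← sub_smul, add_mul, mul_add, smul_mul_assoc, mul_smul_comm, hen, hne, hnn]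
  module

theorem eq_of_sepId_mem {a l a' l' b' : ℂ} (h : NForm A a' l' b') (hal : a' ≠ l')
    (hm : sepId a l ∈ IdSet A) : l * a' = a * l' := by
  obtain ⟨e, n, hind, hee, hen, hne, hnn⟩ := h
  have h1 := hm (fun i => if i = 2 then n else e)
  rw [lift_sepId] at h1
  simp only [hen, hne, ← sub_smul, smul_mul_assoc, mul_smul_comm, OfNat.one_ne_ofNat,
    OfNat.zero_ne_ofNat, if_true, if_false] at h1
  have := (hind 0 (l * ((l' - a') * a') - a * ((l' - a') * l')) (by rw [← h1]; module)).2
  have h2 : (l' - a') * (l * a' - a * l') = 0 := by linear_combination this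
  exact sub_eq_zero.1 ((mul_eq_zero.1 h2).resolve_left (sub_ne_zero.2 hal.symm))

end

theorem IdSet_eq_of_iso {A : Type} [NonUnitalNonAssocRing A] [Module ℂ A]
    [IsScalarTower ℂ A A] [SMulCommClass ℂ A A]
    {B : Type} [NonUnitalNonAssocRing B] [Module ℂ B]
    [IsScalarTower ℂ B B] [SMulCommClass ℂ B B]
    (φ : A →ₙₐ[ℂ] B) (hφ : Function.Bijective φ) : IdSet A = IdSet B := by
  have key : ∀ (a : ℕ → A) (f : FreeA),
      φ (FreeNonUnitalNonAssocAlgebra.lift ℂ a f) =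
        FreeNonUnitalNonAssocAlgebra.lift ℂ (φ ∘ a) f := by
    intro a f
    have : φ.comp (FreeNonUnitalNonAssocAlgebra.lift ℂ a) =
        FreeNonUnitalNonAssocAlgebra.lift ℂ (φ ∘ a) := by
      apply FreeNonUnitalNonAssocAlgebra.hom_ext
      intro i
      simp
    exact DFunLike.congr_fun this f
  ext f
  constructor
  · intro hf b
    choose g hg using hφ.2
    have hb : b = φ ∘ (g ∘ b) := by funext i; simp [hg]
    rw [hb, ← key, hf, map_zero]
  · intro hf a
    apply hφ.1
    rw [key, hf, map_zero]

/-- Two-dimensional Novikov `ℂ`-algebras that are not associative are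
isomorphic if and only if they satisfy the same polynomial identities. -/
theorem novikov_dim2_isomorphic_iff_same_identities
    (A : Type) [NonUnitalNonAssocRing A] [Module ℂ A]
    [IsScalarTower ℂ A A] [SMulCommClass ℂ A A]
    (B : Type) [NonUnitalNonAssocRing B] [Module ℂ B]
    [IsScalarTower ℂ B B] [SMulCommClass ℂ B B]
    (hdimA : Module.finrank ℂ A = 2) (hdimB : Module.finrank ℂ B = 2)
    (hA_lsym : ∀ x y z : A, (x * y) * z - x * (y * z) = (y * x) * z - y * (x * z))
    (hA_rcom : ∀ x y z : A, (x * y) * z = (x * z) * y)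
    (hB_lsym : ∀ x y z : B, (x * y) * z - x * (y * z) = (y * x) * z - y * (x * z))
    (hB_rcom : ∀ x y z : B, (x * y) * z = (x * z) * y)
    (hA_nonassoc : ¬ ∀ x y z : A, (x * y) * z = x * (y * z))
    (hB_nonassoc : ¬ ∀ x y z : B, (x * y) * z = x * (y * z)) :
    (∃ φ : A →ₙₐ[ℂ] B, Function.Bijective φ) ↔ IdSet A = IdSet B := by
  constructor
  · rintro ⟨φ, hφ⟩
    exact IdSet_eq_of_iso φ hφ
  · intro hId
    obtain ⟨a, l, b, hA, hal, hb⟩ := exists_NForm hdimA hA_lsym hA_rcom hA_nonassoc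
    obtain ⟨a', l', b', hB, hal', hb'⟩ := exists_NForm hdimB hB_lsym hB_rcom hB_nonassoc
    have hprop : l * a' = a * l' :=
      eq_of_sepId_mem hB hal' (hId ▸ sepId_mem hdimA hA)
    have hne : a - l ≠ 0 := sub_ne_zero.2 hal
    have hne' : a' - l' ≠ 0 := sub_ne_zero.2 hal'
    obtain ⟨t, ht⟩ : ∃ t : ℂ, t = (a' - l') / (a - l) := ⟨_, rfl⟩
    have ht0 : t ≠ 0 := ht ▸ div_ne_zero hne' hne
    have hta : t * a = a' := by
      rw [ht]; field_simp; linear_combination hprop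
    have htl : t * l = l' := by
      rw [ht]; field_simp; linear_combination hprop
    by_cases hl : l = 0
    · have hl' : l' = 0 := by rw [← htl, hl, mul_zero]
      have hb1 := hb hl
      have hb1' := hb' hl'
      have h2 := hA.scale t (t ^ 2 * b / b') ht0 (by positivity)
      rw [hta, htl, show t ^ 2 * b / (t ^ 2 * b / b') = b' by field_simp] at h2
      exact h2.iso hdimA hdimB hB
    · have hl' : l' ≠ 0 := by rw [← htl]; exact mul_ne_zero ht0 hl
      have h2 := hA.scale t 1 ht0 one_ne_zero
      rw [hta, htl] at h2
      exact (h2.shift hl').iso hdimA hdimB (hB.shift hl')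
end
end

section
/- Let A be a two-dimensional Novikov algebra over ℂ and let f = f(x₁,…,xₙ) ∈ ℂ⟨X⟩ be a multilinear polynomial (a ℂ-linear combination of monomials in which each of x₁,…,xₙ occurs exactly once). Then the image f(A) = {f(a₁,…,aₙ) : a₁,…,aₙ ∈ A} is a ℂ-linear subspace of A. -/
noncomputable section

/-- the multiset of variable indices (with multiplicity) of a nonassociative monomial. -/
def leaves : FreeMagma ℕ → Multiset ℕ
  | .of i => {i}
  | .mul a b => leaves a + leaves b

/-- the monomial of `ℂ⟨X⟩` corresponding to an element of the free magma on the variables. -/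
def magmaMono : FreeMagma ℕ → FreeA
  | .of i => xv i
  | .mul a b => magmaMono a * magmaMono b

/-- `Pₙ`: the `ℂ`-span of the multilinear monomials in `x₁, …, xₙ`, i.e. of all
products (with arbitrary bracketing and order) in which each of `x₁, …, xₙ`
occurs exactly once. -/
def Pn (n : ℕ) : Submodule ℂ FreeA :=
  Submodule.span ℂ
    {f | ∃ m : FreeMagma ℕ, leaves m = (Finset.Icc 1 n).val ∧ f = magmaMono m}

/-- the image `f(A) = {f(a₁, a₂, …) : aᵢ ∈ A}` of the algebra `A` with respect
to `f ∈ ℂ⟨X⟩`. -/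
def polyImage (A : Type) [NonUnitalNonAssocSemiring A] [Module ℂ A]
    [IsScalarTower ℂ A A] [SMulCommClass ℂ A A] (f : FreeA) : Set A :=
  {v | ∃ a : ℕ → A, FreeNonUnitalNonAssocAlgebra.lift ℂ a f = v}

section Cross

variable {A : Type} [AddCommGroup A] [Module ℂ A]

/-- additivity and homogeneity in the variable `i`. -/
def LinAt {B : Type} [AddCommGroup B] [Module ℂ B] (T : (ℕ → A) → B) (i : ℕ) : Prop :=
  (∀ a x y, T (Function.update a i (x + y)) = T (Function.update a i x) + T (Function.update a i y))
  ∧ (∀ a (c : ℂ) x, T (Function.update a i (c • x)) = c • T (Function.update a i x))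

/-- Two multilinear forms with an inclusion of zero sets are proportional. -/
theorem cross_eq (F G : (ℕ → A) → ℂ) (hz : ∀ a, F a = 0 → G a = 0) (s : Finset ℕ) :
    (∀ i ∈ s, LinAt F i) → (∀ i ∈ s, LinAt G i) →
    ∀ b b' : ℕ → A, (∀ j, j ∉ s → b j = b' j) → G b * F b' = G b' * F b := by
  classical
  induction s using Finset.induction_on with
  | empty =>
    intro _ _ b b' h
    have : b = b' := funext fun j => h j (by simp)
    subst this
    rfl
  | insert i s his ih =>
    intro hF hG b b' h
    have ih' := ih (fun j hj => hF j (Finset.mem_insert_of_mem hj))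
      (fun j hj => hG j (Finset.mem_insert_of_mem hj))
    obtain ⟨Fa, Fs⟩ := hF i (Finset.mem_insert_self i s)
    obtain ⟨Ga, Gs⟩ := hG i (Finset.mem_insert_self i s)
    have one : ∀ (a : ℕ → A) (x y : A),
        G (Function.update a i x) * F (Function.update a i y)
          = G (Function.update a i y) * F (Function.update a i x) := by
      intro a x y
      have h1 : F (Function.update a i (F (Function.update a i y) • x
          + (-F (Function.update a i x)) • y)) = 0 := by
        rw [Fa, Fs, Fs]; simp only [smul_eq_mul]; ring
      have h2 := hz _ h1
      rw [Ga, Gs, Gs] at h2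
      simp only [smul_eq_mul] at h2
      linear_combination h2
    have tr : ∀ p q r : ℕ → A, F q ≠ 0 → G p * F q = G q * F p → G q * F r = G r * F q →
        G p * F r = G r * F p := by
      intro p q r hq h1 h2
      apply mul_left_cancel₀ hq
      linear_combination F r * h1 + F p * h2
    have two : ∀ x : A, G (Function.update b i x) * F (Function.update b' i x)
          = G (Function.update b' i x) * F (Function.update b i x) := by
      intro x
      apply ih'
      intro j hj
      by_cases hji : j = i
      · subst hji; simp
      · simp only [Function.update_of_ne hji]
        exact h j (by simp [hji, hj])
    by_cases hb : F b = 0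
    · rw [hb, hz b hb]; simp
    by_cases hb' : F b' = 0
    · rw [hb', hz b' hb']; simp
    have eb : b = Function.update b i (b i) := by simp
    have eb' : b' = Function.update b' i (b' i) := by simp
    set x := b i with hx
    set x' := b' i with hx'
    rw [eb] at hb
    rw [eb'] at hb'
    rw [eb, eb']
    by_cases hp : F (Function.update b' i x) = 0
    · by_cases hq : F (Function.update b i x') = 0
      · have hm : F (Function.update b i (x + x')) ≠ 0 := by rw [Fa, hq, add_zero]; exact hb
        have hm' : F (Function.update b' i (x + x')) ≠ 0 := by rw [Fa, hp, zero_add]; exact hb'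
        exact tr _ _ _ hm (one _ _ _) (tr _ _ _ hm' (two _) (one _ _ _))
      · exact tr _ _ _ hq (one _ _ _) (two _)
    · exact tr _ _ _ hp (two _) (one _ _ _)

end Cross

section Lift

variable {A : Type} [NonUnitalNonAssocRing A] [Module ℂ A]
    [IsScalarTower ℂ A A] [SMulCommClass ℂ A A]

theorem lift_xv (a : ℕ → A) (i : ℕ) : FreeNonUnitalNonAssocAlgebra.lift ℂ a (xv i) = a i := by
  simp [xv]

theorem mono_congr (m : FreeMagma ℕ) (a b : ℕ → A) (h : ∀ j ∈ leaves m, a j = b j) :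
    FreeNonUnitalNonAssocAlgebra.lift ℂ a (magmaMono m)
      = FreeNonUnitalNonAssocAlgebra.lift ℂ b (magmaMono m) := by
  induction m with
  | ih1 i => 
    change FreeNonUnitalNonAssocAlgebra.lift ℂ a (xv i)
      = FreeNonUnitalNonAssocAlgebra.lift ℂ b (xv i)
    rw [lift_xv, lift_xv]
    exact h i (Multiset.mem_singleton_self i)
  | ih2 p q hp hq =>
    have h' : ∀ j ∈ leaves p + leaves q, a j = b j := h
    change FreeNonUnitalNonAssocAlgebra.lift ℂ a (magmaMono p * magmaMono q)
      = FreeNonUnitalNonAssocAlgebra.lift ℂ b (magmaMono p * magmaMono q)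
    rw [map_mul, map_mul, hp fun j hj => h' j (Multiset.mem_add.2 (Or.inl hj)),
      hq fun j hj => h' j (Multiset.mem_add.2 (Or.inr hj))]

theorem mono_upd (m : FreeMagma ℕ) (a : ℕ → A) (i : ℕ) (x y : A) (h : i ∉ leaves m) :
    FreeNonUnitalNonAssocAlgebra.lift ℂ (Function.update a i x) (magmaMono m)
      = FreeNonUnitalNonAssocAlgebra.lift ℂ (Function.update a i y) (magmaMono m) := by
  apply mono_congr
  intro j hj
  have : j ≠ i := fun e => h (e ▸ hj)
  simp [Function.update_of_ne this]

theorem mono_lin (m : FreeMagma ℕ) (i : ℕ) (h : (leaves m).count i = 1) :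
    LinAt (fun a : ℕ → A => FreeNonUnitalNonAssocAlgebra.lift ℂ a (magmaMono m)) i := by
  induction m with
  | ih1 k =>
    have hk : i = k := by
      by_contra hne
      have : Multiset.count i ({k} : Multiset ℕ) = 1 := h
      rw [Multiset.count_singleton, if_neg hne] at this
      exact absurd this (by norm_num)
    subst hk
    have e : ∀ a : ℕ → A, FreeNonUnitalNonAssocAlgebra.lift ℂ a (magmaMono (.of i)) = a i :=
      fun a => lift_xv a i
    simp [LinAt, e]
  | ih2 p q hp hq =>
    have h' : (leaves p + leaves q).count i = 1 := h
    have e : ∀ a : ℕ → A, FreeNonUnitalNonAssocAlgebra.lift ℂ a (magmaMono (p * q))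
        = FreeNonUnitalNonAssocAlgebra.lift ℂ a (magmaMono p)
          * FreeNonUnitalNonAssocAlgebra.lift ℂ a (magmaMono q) :=
      fun a => map_mul (FreeNonUnitalNonAssocAlgebra.lift ℂ a) (magmaMono p) (magmaMono q)
    rw [Multiset.count_add] at h'
    rcases (by omega : ((leaves p).count i = 1 ∧ (leaves q).count i = 0) ∨
      ((leaves p).count i = 0 ∧ (leaves q).count i = 1)) with ⟨h1, h2⟩ | ⟨h1, h2⟩
    · obtain ⟨pa, ps⟩ := hp h1
      have hu := fun (a : ℕ → A) x => mono_upd q a i x 0 (Multiset.count_eq_zero.1 h2)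
      refine ⟨fun a x y => ?_, fun a c x => ?_⟩
      · simp only [e] at pa ⊢
        rw [pa, hu a (x + y), hu a x, hu a y, add_mul]
      · simp only [e] at ps ⊢
        rw [ps, hu a (c • x), hu a x, smul_mul_assoc]
    · obtain ⟨pa, ps⟩ := hq h2
      have hu := fun (a : ℕ → A) x => mono_upd p a i x 0 (Multiset.count_eq_zero.1 h1)
      refine ⟨fun a x y => ?_, fun a c x => ?_⟩
      · simp only [e] at pa ⊢
        rw [pa, hu a (x + y), hu a x, hu a y, mul_add]
      · simp only [e] at ps ⊢
        rw [ps, hu a (c • x), hu a x, mul_smul_comm]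

theorem Pn_congr (n : ℕ) (f : FreeA) (hf : f ∈ Pn n) (a b : ℕ → A)
    (h : ∀ j ∈ Finset.Icc 1 n, a j = b j) :
    FreeNonUnitalNonAssocAlgebra.lift ℂ a f = FreeNonUnitalNonAssocAlgebra.lift ℂ b f := by
  unfold Pn at hf
  induction hf using Submodule.span_induction with
  | mem f hf =>
    obtain ⟨m, hm, rfl⟩ := hf
    apply mono_congr
    rw [hm]
    exact h
  | zero => simp
  | add f g _ _ h1 h2 => rw [map_add, map_add, h1, h2]
  | smul c f _ h1 => rw [map_smul, map_smul, h1]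

theorem Pn_lin (n : ℕ) (f : FreeA) (hf : f ∈ Pn n) (i : ℕ) (hi : i ∈ Finset.Icc 1 n) :
    LinAt (fun a : ℕ → A => FreeNonUnitalNonAssocAlgebra.lift ℂ a f) i := by
  unfold Pn at hf
  induction hf using Submodule.span_induction with
  | mem f hf =>
    obtain ⟨m, hm, rfl⟩ := hf
    apply mono_lin
    rw [hm]
    exact Multiset.count_eq_one_of_mem (Finset.Icc 1 n).nodup hi
  | zero => simp [LinAt]
  | add f g _ _ h1 h2 =>
    refine ⟨fun a x y => ?_, fun a c x => ?_⟩
    · have e1 := h1.1 a x y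
      have e2 := h2.1 a x y
      simp only [map_add] at e1 e2 ⊢
      rw [e1, e2]; abel
    · have e1 := h1.2 a c x
      have e2 := h2.2 a c x
      simp only [map_add] at e1 e2 ⊢
      rw [e1, e2, smul_add]
  | smul d f _ h1 =>
    refine ⟨fun a x y => ?_, fun a c x => ?_⟩
    · have e1 := h1.1 a x y
      simp only [map_smul] at e1 ⊢
      rw [e1, smul_add]
    · have e1 := h1.2 a c x
      simp only [map_smul] at e1 ⊢
      rw [e1, smul_comm]

end Lift

/-- The image of a two-dimensional Novikov `ℂ`-algebra with respect to any
multilinear polynomial (an element of `Pₙ`, the span of the multilinear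
monomials in `x₁, …, xₙ`) is a `ℂ`-linear subspace. -/
theorem novikov_dim2_multilinear_image_is_subspace
    (A : Type) [NonUnitalNonAssocRing A] [Module ℂ A]
    [IsScalarTower ℂ A A] [SMulCommClass ℂ A A]
    (hdim : Module.finrank ℂ A = 2)
    (h_lsym : ∀ x y z : A, (x * y) * z - x * (y * z) = (y * x) * z - y * (x * z))
    (h_rcom : ∀ x y z : A, (x * y) * z = (x * z) * y)
    (n : ℕ) (f : FreeA) (hf : f ∈ Pn n) :
    ∃ S : Submodule ℂ A, (S : Set A) = polyImage A f := by
  classical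
  have hfin : FiniteDimensional ℂ A := FiniteDimensional.of_finrank_pos (by omega)
  set T : (ℕ → A) → A := fun a => FreeNonUnitalNonAssocAlgebra.lift ℂ a f with hT
  have hlin : ∀ i ∈ Finset.Icc 1 n, LinAt T i := fun i hi => Pn_lin n f hf i hi
  have hcong : ∀ a b : ℕ → A, (∀ j ∈ Finset.Icc 1 n, a j = b j) → T a = T b :=
    fun a b h => Pn_congr n f hf a b h
  have himg : polyImage A f = Set.range T := rfl
  rw [himg]
  by_cases hall : ∀ a, T a = 0
  · refine ⟨⊥, ?_⟩
    ext v
    simp [hall, eq_comm]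
  push Not at hall
  obtain ⟨b, hb⟩ := hall
  have hn : 1 ∈ Finset.Icc 1 n := by
    rcases Nat.eq_zero_or_pos n with h0 | h0
    · exfalso
      subst h0
      apply hb
      have : f = 0 := by
        have hP : Pn 0 = ⊥ := by
          unfold Pn
          rw [Submodule.span_eq_bot]
          rintro g ⟨m, hm, rfl⟩
          exfalso
          have hm' : leaves m = 0 := by simpa using hm
          clear hm
          induction m with
          | ih1 k => exact Multiset.singleton_ne_zero k hm'
          | ih2 p q hp hq =>
            have h2 : leaves p + leaves q = 0 := hm'
            exact hp (by simpa using (add_eq_zero.1 h2).1)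
        rw [hP] at hf
        simpa using hf
      simp [hT, this]
    · exact Finset.mem_Icc.2 ⟨le_refl _, h0⟩
  have hsc : ∀ (c : ℂ) a, c • T a ∈ Set.range T := by
    intro c a
    refine ⟨Function.update a 1 (c • a 1), ?_⟩
    rw [(hlin 1 hn).2]
    simp
  by_cases hsurj : ∀ u, u ∈ Set.range T
  · exact ⟨⊤, by ext v; simpa using hsurj v⟩
  push Not at hsurj
  obtain ⟨u, hu⟩ := hsurj
  have hu0 : u ≠ 0 := by
    rintro rfl
    exact hu (by simpa using hsc 0 b)
  have hspan : Module.finrank ℂ (Submodule.span ℂ {u}) = 1 := finrank_span_singleton hu0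
  have hlt : Submodule.span ℂ {u} < ⊤ := by
    rw [lt_top_iff_ne_top]
    intro h
    rw [h, finrank_top] at hspan
    omega
  obtain ⟨φ, hφ0, hφ⟩ := Submodule.exists_le_ker_of_lt_top _ hlt
  have hker : Submodule.span ℂ {u} = LinearMap.ker φ := by
    apply Submodule.eq_of_le_of_finrank_eq hφ
    have := Module.Dual.finrank_ker_add_one_of_ne_zero (f := φ) hφ0
    omega
  have hzero : ∀ a, φ (T a) = 0 → T a = 0 := by
    intro a ha
    have hm : T a ∈ Submodule.span ℂ {u} := by rw [hker]; exact ha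
    obtain ⟨c, hc⟩ := Submodule.mem_span_singleton.1 hm
    by_cases hc0 : c = 0
    · rw [← hc, hc0, zero_smul]
    · exfalso
      apply hu
      have := hsc c⁻¹ a
      rwa [← hc, smul_smul, inv_mul_cancel₀ hc0, one_smul] at this
  have hcomp : ∀ ψ : Module.Dual ℂ A, ∀ i ∈ Finset.Icc 1 n, LinAt (fun a => ψ (T a)) i := by
    intro ψ i hi
    refine ⟨fun a x y => ?_, fun a c x => ?_⟩
    · simp only [(hlin i hi).1, map_add]
    · simp only [(hlin i hi).2, map_smul]
  have hcross : ∀ a, φ (T b) • T a = φ (T a) • T b := by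
    intro a
    rw [← sub_eq_zero, ← Module.forall_dual_apply_eq_zero_iff ℂ]
    intro ψ
    set a' : ℕ → A := fun j => if j ∈ Finset.Icc 1 n then a j else b j with ha'
    have e : T a' = T a := hcong _ _ fun j hj => by simp only [ha', if_pos hj]
    have := cross_eq (fun a => φ (T a)) (fun a => ψ (T a))
      (fun a h => by simp only [hzero a h, map_zero]) (Finset.Icc 1 n) (hcomp φ) (hcomp ψ) a' b
      (fun j hj => by simp only [ha', if_neg hj])
    simp only [e] at this
    rw [map_sub, map_smul, map_smul, smul_eq_mul, smul_eq_mul]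
    linear_combination this
  have hφb : φ (T b) ≠ 0 := fun h => hb (hzero b h)
  refine ⟨Submodule.span ℂ {T b}, ?_⟩
  ext v
  rw [SetLike.mem_coe, Submodule.mem_span_singleton]
  constructor
  · rintro ⟨c, rfl⟩
    exact hsc c b
  · rintro ⟨a, rfl⟩
    refine ⟨(φ (T b))⁻¹ * φ (T a), ?_⟩
    rw [mul_smul, ← hcross a, smul_smul, inv_mul_cancel₀ hφb, one_smul]
end
end
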